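/- Let d ≥ 3 and let D ⊂ ℝ^d be a convex domain. Then h_D(x,v) ≤ 2 g_D(x,v) for all x ∈ D and v ∈ ℝ^d, and H_D(x,y) ≤ 2 ρ_D(x,y) for all x, y ∈ D. -/

import Mathlib

open scoped RealInnerProductSpace ENNReal
open Metric Set Filter

noncomputable section

/-- Euclidean space `ℝ^d`. -/
abbrev Euc (d : ℕ) := EuclideanSpace ℝ (Fin d)

/-- The open unit disk in `ℝ²`. -/
def unitDisk : Set (Euc 2) := Metric.ball 0 1

/-- Partial derivative of `f` at `z` in the `i`-th coordinate direction. -/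
def pd {d : ℕ} (i : Fin 2) (f : Euc 2 → Euc d) (z : Euc 2) : Euc d :=
  fderiv ℝ f z (EuclideanSpace.single i 1)

/-- `f` is a conformal harmonic map on the unit disk: it is `C²`, its (vector)
Laplacian vanishes (equivalently, every component is harmonic), and at each point
its two partial derivatives are orthogonal and of equal norm. -/
def ConformalHarmonicOnDisk {d : ℕ} (f : Euc 2 → Euc d) : Prop :=
  ContDiffOn ℝ 2 f unitDisk ∧
  (∀ z ∈ unitDisk,
    fderiv ℝ (pd 0 f) z (EuclideanSpace.single 0 1)
      + fderiv ℝ (pd 1 f) z (EuclideanSpace.single 1 1) = 0) ∧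
  (∀ z ∈ unitDisk, ‖pd 0 f z‖ = ‖pd 1 f z‖ ∧ ⟪pd 0 f z, pd 1 f z⟫ = 0)

/-- The minimal (Forstnerič–Kalaj) metric of a domain `D ⊆ ℝ^d`:
`g_D(x,v) = inf {1/r : r > 0, f ∈ CH(𝔻, D), f 0 = x, f_x 0 = r • v}`. -/
def minMetric {d : ℕ} (D : Set (Euc d)) (x v : Euc d) : ℝ :=
  sInf {c : ℝ | ∃ r : ℝ, 0 < r ∧ c = 1 / r ∧
    ∃ f : Euc 2 → Euc d, ConformalHarmonicOnDisk f ∧ (∀ z ∈ unitDisk, f z ∈ D) ∧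
      f 0 = x ∧ pd 0 f 0 = r • v}

/-- `γ` is a piecewise `C¹` curve on `[a, b]`. -/
def PiecewiseC1On {d : ℕ} (γ : ℝ → Euc d) (a b : ℝ) : Prop :=
  ContinuousOn γ (Set.Icc a b) ∧
  ∃ (n : ℕ) (t : Fin (n + 2) → ℝ), Monotone t ∧ t 0 = a ∧ t (Fin.last (n + 1)) = b ∧
    ∀ i : Fin (n + 1), ContDiffOn ℝ 1 γ (Set.Icc (t i.castSucc) (t i.succ))

/-- The minimal pseudodistance `ρ_D`: infimum of minimal lengths of piecewise `C¹`
curves in `D` joining `x` to `y`. -/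
def minDist {d : ℕ} (D : Set (Euc d)) (x y : Euc d) : ℝ :=
  sInf {L : ℝ | ∃ γ : ℝ → Euc d, PiecewiseC1On γ 0 1 ∧
    (∀ t ∈ Set.Icc (0:ℝ) 1, γ t ∈ D) ∧ γ 0 = x ∧ γ 1 = y ∧
    L = ∫ t in (0:ℝ)..(1:ℝ), minMetric D (γ t) (deriv γ t)}

/-- The Gromov product `(x|y)_o` with respect to the minimal pseudodistance of `D`. -/
def gromovProd {d : ℕ} (D : Set (Euc d)) (o x y : Euc d) : ℝ :=
  (minDist D x o + minDist D y o - minDist D x y) / 2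

/-- `D` is hyperbolic: the minimal pseudodistance is a genuine distance. -/
def MinHyperbolic {d : ℕ} (D : Set (Euc d)) : Prop :=
  ∀ x ∈ D, ∀ y ∈ D, x ≠ y → 0 < minDist D x y

/-- The Hessian quadratic form of `u` at `x` in direction `v`. -/
def hessQ {d : ℕ} (u : Euc d → ℝ) (x v : Euc d) : ℝ :=
  fderiv ℝ (fun y => fderiv ℝ u y v) x v

/-- `D` is a bounded domain with `C²` boundary, described by a `C²` defining
function `u` on a neighborhood `U` of `∂D` with nonvanishing differential. -/
def IsC2BoundedDomain {d : ℕ} (D : Set (Euc d)) : Prop :=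
  IsOpen D ∧ IsConnected D ∧ Bornology.IsBounded D ∧
  ∃ (U : Set (Euc d)) (u : Euc d → ℝ), IsOpen U ∧ frontier D ⊆ U ∧ ContDiffOn ℝ 2 u U ∧
    D ∩ U = {x | x ∈ U ∧ u x < 0} ∧ frontier D = {x | x ∈ U ∧ u x = 0} ∧
    ∀ x ∈ frontier D, fderiv ℝ u x ≠ 0

/-- `D` is a bounded strongly minimally convex domain: it has a `C²` defining function
which is strongly minimally plurisubharmonic near `∂D`, i.e. the trace of its Hessian
on every 2-plane (spanned by an orthonormal pair `v, w`) is strictly positive. -/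
def IsStronglyMinimallyConvex {d : ℕ} (D : Set (Euc d)) : Prop :=
  IsOpen D ∧ IsConnected D ∧ Bornology.IsBounded D ∧
  ∃ (U : Set (Euc d)) (u : Euc d → ℝ), IsOpen U ∧ frontier D ⊆ U ∧ ContDiffOn ℝ 2 u U ∧
    D ∩ U = {x | x ∈ U ∧ u x < 0} ∧ frontier D = {x | x ∈ U ∧ u x = 0} ∧
    (∀ x ∈ frontier D, fderiv ℝ u x ≠ 0) ∧
    (∀ x ∈ U, ∀ v w : Euc d, ‖v‖ = 1 → ‖w‖ = 1 → ⟪v, w⟫ = 0 →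
      0 < hessQ u x v + hessQ u x w)

/-- `D` is a bounded strongly convex domain: convex, with a `C²` defining function whose
Hessian is positive definite on the tangent space at every boundary point
(equivalently, all principal curvatures of `∂D` w.r.t. the inner normal are positive). -/
def IsStronglyConvexDomain {d : ℕ} (D : Set (Euc d)) : Prop :=
  IsOpen D ∧ IsConnected D ∧ Bornology.IsBounded D ∧ Convex ℝ D ∧
  ∃ (U : Set (Euc d)) (u : Euc d → ℝ), IsOpen U ∧ frontier D ⊆ U ∧ ContDiffOn ℝ 2 u U ∧
    D ∩ U = {x | x ∈ U ∧ u x < 0} ∧ frontier D = {x | x ∈ U ∧ u x = 0} ∧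
    (∀ x ∈ frontier D, fderiv ℝ u x ≠ 0) ∧
    (∀ ξ ∈ frontier D, ∀ w : Euc d, w ≠ 0 → fderiv ℝ u ξ w = 0 → 0 < hessQ u ξ w)

/-- For `x ∈ D` with nearest boundary point `p`, the outer unit normal direction
`n_{π(x)} = (p - x)/‖p - x‖`. -/
def nvec {d : ℕ} (x p : Euc d) : Euc d := ‖p - x‖⁻¹ • (p - x)

/-- Normal component of `v` at `x` with nearest boundary point `p`. -/
def vN {d : ℕ} (x p v : Euc d) : Euc d := ⟪v, nvec x p⟫ • nvec x p

/-- Tangential component of `v` at `x` with nearest boundary point `p`. -/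
def vT {d : ℕ} (x p v : Euc d) : Euc d := v - vN x p v

/-- The intrinsic distance `H` on the boundary `∂D`: infimum of Euclidean lengths of
piecewise `C¹` curves in `∂D` joining two boundary points. -/
def bdist {d : ℕ} (D : Set (Euc d)) (ξ η : Euc d) : ℝ :=
  sInf {L : ℝ | ∃ α : ℝ → Euc d, PiecewiseC1On α 0 1 ∧
    (∀ t ∈ Set.Icc (0:ℝ) 1, α t ∈ frontier D) ∧ α 0 = ξ ∧ α 1 = η ∧
    L = ∫ t in (0:ℝ)..(1:ℝ), ‖deriv α t‖}

/-- `h(x) = δ_D(x)^{1/2}`. -/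
def hfun {d : ℕ} (D : Set (Euc d)) (x : Euc d) : ℝ :=
  Real.sqrt (Metric.infDist x (frontier D))

/-- The length of a curve with respect to the boundary Finsler metric
`F(x,v) = ‖v_N‖/(2 δ_D(x)) + ‖v_T‖/δ_D(x)^{1/2}`. -/
def Flen {d : ℕ} (D : Set (Euc d)) (π : Euc d → Euc d) (γ : ℝ → Euc d) : ℝ :=
  ∫ t in (0:ℝ)..(1:ℝ),
    (‖vN (γ t) (π (γ t)) (deriv γ t)‖ / (2 * Metric.infDist (γ t) (frontier D))
      + ‖vT (γ t) (π (γ t)) (deriv γ t)‖ / Real.sqrt (Metric.infDist (γ t) (frontier D)))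

/-- The filling Finsler metric `F`: the boundary Finsler metric on
`N = {δ_D ≤ ε}` and `c‖v‖` elsewhere. -/
def Fmet {d : ℕ} (D : Set (Euc d)) (π : Euc d → Euc d) (ε c : ℝ) (x v : Euc d) : ℝ :=
  if Metric.infDist x (frontier D) ≤ ε then
    ‖vN x (π x) v‖ / (2 * Metric.infDist x (frontier D))
      + ‖vT x (π x) v‖ / Real.sqrt (Metric.infDist x (frontier D))
  else c * ‖v‖

/-- The intrinsic distance `d_F` associated to the filling Finsler metric `F`. -/
def dF {d : ℕ} (D : Set (Euc d)) (π : Euc d → Euc d) (ε c : ℝ) (x y : Euc d) : ℝ :=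
  sInf {L : ℝ | ∃ γ : ℝ → Euc d, PiecewiseC1On γ 0 1 ∧
    (∀ t ∈ Set.Icc (0:ℝ) 1, γ t ∈ D) ∧ γ 0 = x ∧ γ 1 = y ∧
    L = ∫ t in (0:ℝ)..(1:ℝ), Fmet D π ε c (γ t) (deriv γ t)}

/-- The hyperbolic filling distance
`d_H(x,y) = 2 log((H(π x, π y) + h(x) ∨ h(y)) / √(h(x) h(y)))`. -/
def dH {d : ℕ} (D : Set (Euc d)) (π : Euc d → Euc d) (x y : Euc d) : ℝ :=
  2 * Real.log ((bdist D (π x) (π y) + max (hfun D x) (hfun D y)) /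
    Real.sqrt (hfun D x * hfun D y))

/-- `δ̂_D(x,v)`: the supremum over 2-dimensional linear subspaces `Λ ∋ v` of the
distance (in `ℝ≥0∞`, so `∞` if `x + Λ ⊆ D`) from `x` to `(x + Λ) \ D`. -/
def deltaHat {d : ℕ} (D : Set (Euc d)) (x v : Euc d) : ℝ≥0∞ :=
  ⨆ (Λ : Submodule ℝ (Euc d)) (_ : Module.finrank ℝ Λ = 2) (_ : v ∈ Λ),
    ⨅ (y : Euc d) (_ : y - x ∈ Λ ∧ y ∉ D), edist x y

/-- The positive parameter at which the ray `t ↦ x + t • v` exits the convex domain `D`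
(equal to `0`, by the `sInf ∅ = 0` convention, when the ray stays in `D`,
i.e. when the corresponding chord endpoint is the point at infinity). -/
def chordParam {d : ℕ} (D : Set (Euc d)) (x v : Euc d) : ℝ :=
  sInf {s : ℝ | 0 < s ∧ x + s • v ∉ D}

/-- The Hilbert Finsler metric `h_D(x,v) = (‖v‖/2)(1/‖x-a‖ + 1/‖x-b‖)` of a convex
domain, with the convention `1/‖x-∞‖ = 0` (here `‖x-b‖ = chordParam D x v • ‖v‖` and
`‖x-a‖ = chordParam D x (-v) • ‖v‖`, and division by zero is zero). -/
def hilbertFinsler {d : ℕ} (D : Set (Euc d)) (x v : Euc d) : ℝ :=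
  (1/2) * (1 / chordParam D x v + 1 / chordParam D x (-v))

/- The Hilbert distance of a convex domain: for `x ≠ y`,
`H_D(x,y) = ½ log((‖x-b‖ ‖y-a‖)/(‖x-a‖ ‖y-b‖))` where `a, x, y, b` are aligned on the
chord through `x, y`, with the convention that ratios involving the point at infinity
(detected by `chordParam = 0`) are equal to `1`. -/
open Classical in
def hilbertDist {d : ℕ} (D : Set (Euc d)) (x y : Euc d) : ℝ :=
  if x = y then 0 else
    (1/2) * Real.log
      ((if chordParam D x (y - x) = 0 then 1
        else chordParam D x (y - x) / (chordParam D x (y - x) - 1)) *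
       (if chordParam D x (x - y) = 0 then 1
        else (1 + chordParam D x (x - y)) / chordParam D x (x - y)))

/-!
Let `l` be a linear functional with `l < c` on `D`. Along a conformal harmonic disk `f` in `D`, the
function `c - l ∘ f` is positive and harmonic on the unit disk, so by the Schwarz–Pick inequality
for the half-plane its gradient at `0` is at most twice its value there. Hence
`|l v| ≤ 2 g_D(x, v) (c - l x)`; integrating along curves,
`|log (c - l y) - log (c - l x)| ≤ 2 ρ_D(x, y)`. The Hilbert metric and distance are half the sum
of two such quantities, for the half-spaces supporting `D` at the two ends of the chord.

Integrating is legitimate because `g_D` is upper semicontinuous, hence Borel: a slightly shrunk disk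
through `(x, v)` can be carried to any nearby `(x', v')` by a similarity close to the identity.
-/

section PositiveHarmonic

open InnerProductSpace ComplexConjugate

lemma norm_sub_div_add_conj_le_one {z w : ℂ} (hz : 0 ≤ z.re) (hw : 0 ≤ w.re) :
    ‖(z - w) / (z + conj w)‖ ≤ 1 := by
  rw [norm_div]
  refine div_le_one_of_le₀ ?_ (norm_nonneg _)
  rw [← sq_le_sq₀ (norm_nonneg _) (norm_nonneg _), ← Complex.normSq_eq_norm_sq,
    ← Complex.normSq_eq_norm_sq, Complex.normSq_apply, Complex.normSq_apply]
  simp only [Complex.sub_re, Complex.sub_im, Complex.add_re, Complex.add_im,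
    Complex.conj_re, Complex.conj_im]
  nlinarith [mul_nonneg hz hw]

lemma add_conj_ne_zero {z w : ℂ} (hz : 0 < z.re) (hw : 0 < w.re) : z + conj w ≠ 0 := fun h => by
  have hre : z.re + w.re = 0 := by simpa using congrArg Complex.re h
  linarith

-- The Cayley transform `w ↦ (w - F c) / (w + conj (F c))` maps the right half-plane to the disk.
lemma norm_deriv_le_of_re_pos {F : ℂ → ℂ} {c : ℂ} {R : ℝ} (hR : 0 < R)
    (hF : DifferentiableOn ℂ F (ball c R)) (hpos : ∀ z ∈ ball c R, 0 < (F z).re) :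
    ‖deriv F c‖ ≤ 2 * (F c).re / R := by
  have hc : 0 < (F c).re := hpos c (mem_ball_self hR)
  have hne : ∀ z ∈ ball c R, F z + conj (F c) ≠ 0 := fun z hz => add_conj_ne_zero (hpos z hz) hc
  have hsum : F c + conj (F c) = ((2 * (F c).re : ℝ) : ℂ) := Complex.add_conj _
  have hschwarz : ‖deriv (fun z => (F z - F c) / (F z + conj (F c))) c‖ ≤ 1 / R := by
    refine Complex.norm_deriv_le_div_of_mapsTo_ball ((hF.sub_const _).div (hF.add_const _) hne)
      (fun z hz => ?_) hR
    simpa using norm_sub_div_add_conj_le_one (hpos z hz).le hc.le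
  have hcayley : deriv (fun z => (F z - F c) / (F z + conj (F c))) c =
      deriv F c / ((2 * (F c).re : ℝ) : ℂ) := by
    have hFc : HasDerivAt F (deriv F c) c :=
      (hF.differentiableAt (ball_mem_nhds _ hR)).hasDerivAt
    have hne' := hne c (mem_ball_self hR)
    refine ((hFc.sub_const (F c)).div (hFc.add_const _) hne').deriv.trans ?_
    rw [sub_self, zero_mul, sub_zero, ← hsum]
    field_simp
  rw [hcayley, norm_div, Complex.norm_real, Real.norm_of_nonneg (by positivity),
    div_le_iff₀ (by positivity)] at hschwarz
  exact hschwarz.trans_eq (one_div_mul_eq_div _ _)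

lemma norm_fderiv_le_of_harmonicOnNhd_of_pos {U : ℂ → ℝ} {c : ℂ} {R : ℝ} (hR : 0 < R)
    (hU : HarmonicOnNhd U (ball c R)) (hpos : ∀ z ∈ ball c R, 0 < U z) :
    ‖fderiv ℝ U c‖ ≤ 2 * U c / R := by
  obtain ⟨F, hF, hFU⟩ := hU.exists_analyticOnNhd_ball_re_eq
  have hc : c ∈ ball c R := mem_ball_self hR
  have hderiv : ‖deriv F c‖ ≤ 2 * U c / R := by
    rw [← hFU hc]
    exact norm_deriv_le_of_re_pos hR hF.differentiableOn fun z hz =>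
      (hpos z hz).trans_eq (hFU hz).symm
  have hfderiv : fderiv ℝ U c = Complex.reCLM ∘L (deriv F c • (1 : ℂ →L[ℝ] ℂ)) := by
    have hFc := (hF c hc).differentiableAt.hasDerivAt.hasFDerivAt.restrictScalars ℝ
    have hUF : U =ᶠ[nhds c] Complex.reCLM ∘ F :=
      hFU.symm.eventuallyEq_of_mem (ball_mem_nhds c hR)
    rw [hUF.fderiv_eq, (Complex.reCLM.hasFDerivAt.comp c hFc).fderiv]
    ext
    simp [mul_comm]
  refine ContinuousLinearMap.opNorm_le_bound _ ((norm_nonneg _).trans hderiv) fun w => ?_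
  calc ‖fderiv ℝ U c w‖ = |(deriv F c * w).re| := by simp [hfderiv]
    _ ≤ ‖deriv F c‖ * ‖w‖ := (Complex.abs_re_le_norm _).trans_eq (norm_mul _ _)
    _ ≤ 2 * U c / R * ‖w‖ := by gcongr

end PositiveHarmonic

section LaplacianSimilarity

open InnerProductSpace Laplacian

variable {E F G : Type*} [NormedAddCommGroup E] [InnerProductSpace ℝ E] [FiniteDimensional ℝ E]
  [NormedAddCommGroup F] [NormedSpace ℝ F]
  [NormedAddCommGroup G] [InnerProductSpace ℝ G] [FiniteDimensional ℝ G]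

lemma laplacian_comp_smul_linearIsometryEquiv (f : E → F) (e : G ≃ₗᵢ[ℝ] E) (c : ℝ) (x : G) :
    Δ (fun z => f (c • e z)) x = c ^ 2 • Δ f (c • e x) := by
  rcases eq_or_ne c 0 with rfl | hc
  · simp
  let g : G ≃L[ℝ] E := e.toContinuousLinearEquiv.trans
    (ContinuousLinearEquiv.smulLeft (Units.mk0 c hc))
  have hg (z : G) : g z = c • e z := rfl
  have hcomp : iteratedFDeriv ℝ 2 (fun z => f (c • e z)) x =
      (iteratedFDeriv ℝ 2 f (c • e x)).compContinuousLinearMap fun _ => (g : G →L[ℝ] E) := by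
    simp only [← iteratedFDerivWithin_univ]
    exact g.iteratedFDerivWithin_comp_right f uniqueDiffOn_univ (mem_univ (g x)) 2
  rw [laplacian_eq_iteratedFDeriv_stdOrthonormalBasis,
    laplacian_eq_iteratedFDeriv_orthonormalBasis f ((stdOrthonormalBasis ℝ G).map e),
    Finset.smul_sum]
  refine Finset.sum_congr rfl fun i _ => ?_
  simp [hcomp, iteratedFDeriv_two_apply, hg, smul_smul, sq]

lemma harmonicOnNhd_comp_smul_linearIsometryEquiv {f : E → F} {s : Set E} {t : Set G}
    (hf : HarmonicOnNhd f s) (e : G ≃ₗᵢ[ℝ] E) (c : ℝ) (hts : MapsTo (fun z => c • e z) t s) :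
    HarmonicOnNhd (fun z => f (c • e z)) t := by
  intro z hz
  obtain ⟨hdiff, hlap⟩ := hf _ (hts hz)
  have hsmooth : ContDiff ℝ 2 fun z => c • e z := e.contDiff.const_smul c
  refine ⟨hdiff.comp z hsmooth.contDiffAt, ?_⟩
  filter_upwards [hsmooth.continuous.continuousAt.eventually hlap] with y hy
  rw [laplacian_comp_smul_linearIsometryEquiv, hy, Pi.zero_apply, Pi.zero_apply, smul_zero]

end LaplacianSimilarity

section ConformalHarmonic

open InnerProductSpace Laplacian

variable {d d' : ℕ} {f : Euc 2 → Euc d}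

lemma isOpen_unitDisk : IsOpen unitDisk := isOpen_ball

lemma mem_unitDisk {z : Euc 2} : z ∈ unitDisk ↔ ‖z‖ < 1 := mem_ball_zero_iff

lemma zero_mem_unitDisk : (0 : Euc 2) ∈ unitDisk := mem_ball_self one_pos

lemma laplacian_eq_fderiv_pd_add {z : Euc 2} (hf : ContDiffAt ℝ 2 f z) :
    Δ f z = fderiv ℝ (pd 0 f) z (EuclideanSpace.single 0 1) +
      fderiv ℝ (pd 1 f) z (EuclideanSpace.single 1 1) := by
  have hf' : DifferentiableAt ℝ (fderiv ℝ f) z :=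
    (hf.fderiv_right (m := 1) (by norm_num)).differentiableAt one_ne_zero
  have hpd (i : Fin 2) (w : Euc 2) :
      fderiv ℝ (pd i f) z w = fderiv ℝ (fderiv ℝ f) z w (EuclideanSpace.single i 1) := by
    have h := hf'.hasFDerivAt.clm_apply (hasFDerivAt_const (EuclideanSpace.single i (1 : ℝ)) z)
    rw [show fderiv ℝ (pd i f) z = _ from h.fderiv]
    simp
  rw [laplacian_eq_iteratedFDeriv_orthonormalBasis f (EuclideanSpace.basisFun (Fin 2) ℝ)]
  simp [iteratedFDeriv_two_apply, hpd]

lemma conformalHarmonicOnDisk_iff : ConformalHarmonicOnDisk f ↔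
    HarmonicOnNhd f unitDisk ∧
      ∀ z ∈ unitDisk, ‖pd 0 f z‖ = ‖pd 1 f z‖ ∧ ⟪pd 0 f z, pd 1 f z⟫ = 0 := by
  rw [ConformalHarmonicOnDisk, ← and_assoc]
  refine and_congr_left fun _ => ⟨fun ⟨hdiff, hlap⟩ z hz => ?_, fun hf => ⟨hf.contDiffOn, ?_⟩⟩
  · have hdiffAt {y : Euc 2} (hy : y ∈ unitDisk) : ContDiffAt ℝ 2 f y :=
      hdiff.contDiffAt (isOpen_unitDisk.mem_nhds hy)
    refine ⟨hdiffAt hz, ?_⟩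
    filter_upwards [isOpen_unitDisk.mem_nhds hz] with y hy
    rw [laplacian_eq_fderiv_pd_add (hdiffAt hy), hlap y hy, Pi.zero_apply]
  · intro z hz
    rw [← laplacian_eq_fderiv_pd_add (hf z hz).1, (hf z hz).2.self_of_nhds, Pi.zero_apply]

lemma ConformalHarmonicOnDisk.differentiableAt (hf : ConformalHarmonicOnDisk f) {z : Euc 2}
    (hz : z ∈ unitDisk) : DifferentiableAt ℝ f z :=
  (hf.1.contDiffAt (isOpen_unitDisk.mem_nhds hz)).differentiableAt two_ne_zero

lemma pd_comp_smul (i : Fin 2) (f : Euc 2 → Euc d) (ρ : ℝ) (z : Euc 2) :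
    pd i (fun z => f (ρ • z)) z = ρ • pd i f (ρ • z) := by
  rw [pd, fderiv_comp_smul, smul_apply, pd]

lemma pd_const_add_smul_linearIsometry {i : Fin 2} {z : Euc 2} (hf : DifferentiableAt ℝ f z)
    (b : Euc d') (k : ℝ) (R : Euc d →ₗᵢ[ℝ] Euc d') :
    pd i (fun z => b + k • R (f z)) z = k • R (pd i f z) := by
  have h : HasFDerivAt (fun z => b + k • R (f z))
      (k • R.toContinuousLinearMap ∘L fderiv ℝ f z) z :=
    ((R.toContinuousLinearMap.hasFDerivAt.comp z hf.hasFDerivAt).const_smul k).const_add b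
  rw [pd, h.fderiv]
  simp [pd]

lemma smul_mem_unitDisk {ρ : ℝ} (hρ : |ρ| ≤ 1) {z : Euc 2} (hz : z ∈ unitDisk) :
    ρ • z ∈ unitDisk := by
  rw [mem_unitDisk, norm_smul, Real.norm_eq_abs]
  exact (mul_le_of_le_one_left (norm_nonneg z) hρ).trans_lt (mem_unitDisk.1 hz)

lemma ConformalHarmonicOnDisk.comp_smul (hf : ConformalHarmonicOnDisk f) {ρ : ℝ}
    (hρ : |ρ| ≤ 1) : ConformalHarmonicOnDisk fun z => f (ρ • z) := by
  obtain ⟨hharm, hconf⟩ := conformalHarmonicOnDisk_iff.1 hf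
  refine conformalHarmonicOnDisk_iff.2 ⟨?_, fun z hz => ?_⟩
  · exact harmonicOnNhd_comp_smul_linearIsometryEquiv hharm (LinearIsometryEquiv.refl ℝ _) ρ
      fun z hz => smul_mem_unitDisk hρ hz
  · obtain ⟨hnorm, hinner⟩ := hconf _ (smul_mem_unitDisk hρ hz)
    simp only [pd_comp_smul, norm_smul, inner_smul_left, inner_smul_right, hnorm, hinner, mul_zero,
      and_self]

lemma ConformalHarmonicOnDisk.const_add_smul_linearIsometry (hf : ConformalHarmonicOnDisk f)
    (b : Euc d') (k : ℝ) (R : Euc d →ₗᵢ[ℝ] Euc d') :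
    ConformalHarmonicOnDisk fun z => b + k • R (f z) := by
  obtain ⟨hharm, hconf⟩ := conformalHarmonicOnDisk_iff.1 hf
  refine conformalHarmonicOnDisk_iff.2 ⟨?_, fun z hz => ?_⟩
  · exact (harmonicOnNhd_const b).add (hharm.comp_CLM (k • R.toContinuousLinearMap))
  · obtain ⟨hnorm, hinner⟩ := hconf z hz
    simp only [pd_const_add_smul_linearIsometry (hf.differentiableAt hz), norm_smul, R.norm_map,
      inner_smul_left, inner_smul_right, R.inner_map_map, hnorm, hinner, mul_zero, and_self]

lemma pd_id (i : Fin 2) (z : Euc 2) : pd i id z = EuclideanSpace.single i 1 := by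
  simp [pd]

lemma conformalHarmonicOnDisk_id : ConformalHarmonicOnDisk (id : Euc 2 → Euc 2) := by
  refine ⟨contDiffOn_id, fun z _ => ?_, fun z _ => ?_⟩
  · simp [funext (pd_id _)]
  · simp [pd_id, EuclideanSpace.inner_single_left]

-- `c - l ∘ f` is a positive harmonic function.
lemma abs_apply_pd_le_of_harmonicOnNhd (hf : HarmonicOnNhd f unitDisk) (l : Euc d →L[ℝ] ℝ) {c : ℝ}
    (hlt : ∀ z ∈ unitDisk, l (f z) < c) (i : Fin 2) :
    |l (pd i f 0)| ≤ 2 * (c - l (f 0)) := by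
  let φ : ℂ ≃ₗᵢ[ℝ] Euc 2 := Complex.orthonormalBasisOneI.repr
  let U : ℂ → ℝ := fun ζ => c - l (f (φ ζ))
  have hφ : MapsTo φ (ball 0 1) unitDisk := fun ζ hζ => by
    simpa [mem_unitDisk, φ.norm_map] using hζ
  have hU : HarmonicOnNhd U (ball 0 1) := by
    have h := harmonicOnNhd_comp_smul_linearIsometryEquiv hf φ 1 (by simpa using hφ)
    simp only [one_smul] at h
    exact (harmonicOnNhd_const c).sub (h.comp_CLM l)
  have hfderiv : fderiv ℝ U 0 (φ.symm (EuclideanSpace.single i 1)) = -l (pd i f 0) := by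
    have hf0 : HasFDerivAt f (fderiv ℝ f 0) (φ 0) := by
      simpa using ((hf 0 zero_mem_unitDisk).1.differentiableAt two_ne_zero).hasFDerivAt
    have hU0 : HasFDerivAt U _ 0 := (l.hasFDerivAt.comp (0 : ℂ)
      (hf0.comp 0 φ.toContinuousLinearEquiv.hasFDerivAt)).const_sub c
    simp [hU0.fderiv, pd]
  have hbound := norm_fderiv_le_of_harmonicOnNhd_of_pos one_pos hU
    fun ζ hζ => sub_pos.2 (hlt _ (hφ hζ))
  calc |l (pd i f 0)| = ‖fderiv ℝ U 0 (φ.symm (EuclideanSpace.single i 1))‖ := by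
        rw [hfderiv, norm_neg, Real.norm_eq_abs]
    _ ≤ ‖fderiv ℝ U 0‖ * 1 := (ContinuousLinearMap.le_opNorm _ _).trans_eq (by simp)
    _ ≤ 2 * (c - l (f 0)) := by simpa [U] using hbound

end ConformalHarmonic

section LinearIsometry

open Module

variable {E : Type*} [NormedAddCommGroup E] [InnerProductSpace ℝ E] [FiniteDimensional ℝ E]

lemma exists_linearIsometry_single_eq {m : ℕ} (hm : m ≤ finrank ℝ E) (i : Fin m) {u : E}
    (hu : ‖u‖ = 1) :
    ∃ R : EuclideanSpace ℝ (Fin m) →ₗᵢ[ℝ] E, R (EuclideanSpace.single i 1) = u := by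
  obtain ⟨b, hb⟩ := Orthonormal.exists_orthonormalBasis_extension_of_card_eq (𝕜 := ℝ) (E := E)
    (ι := Fin (finrank ℝ E)) (Fintype.card_fin _).symm (v := fun _ => u)
    (s := {Fin.castLE hm i}) ⟨fun _ => hu, fun j k hjk => (hjk (Subsingleton.elim j k)).elim⟩
  let e := EuclideanSpace.basisFun (Fin m) ℝ
  let L : EuclideanSpace ℝ (Fin m) →ₗ[ℝ] E := e.toBasis.constr ℝ (b ∘ Fin.castLE hm)
  have hL (j : Fin m) : L (e j) = b (Fin.castLE hm j) := by
    rw [← e.coe_toBasis]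
    exact e.toBasis.constr_basis ℝ (b ∘ Fin.castLE hm) j
  refine ⟨L.isometryOfOrthonormal (v := e.toBasis) (by simp) ?_, ?_⟩
  · convert b.orthonormal.comp _ (Fin.castLE_injective hm) using 1
    exact funext fun j => by simpa using hL j
  · rw [← EuclideanSpace.basisFun_apply]
    exact (hL i).trans (hb _ rfl)

lemma exists_norm_smul_linearIsometry_single_eq {m : ℕ} (hm : m ≤ finrank ℝ E) (i : Fin m)
    (u : E) : ∃ R : EuclideanSpace ℝ (Fin m) →ₗᵢ[ℝ] E,
      ‖u‖ • R (EuclideanSpace.single i 1) = u := by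
  have : Nontrivial E := finrank_pos_iff.1 (i.pos.trans_le hm)
  obtain ⟨w, hw, hwu⟩ : ∃ w : E, ‖w‖ = 1 ∧ ‖u‖ • w = u := by
    rcases eq_or_ne u 0 with rfl | hu
    · obtain ⟨w, hw⟩ := exists_norm_eq E zero_le_one
      exact ⟨w, hw, by simp⟩
    · exact ⟨‖u‖⁻¹ • u, norm_smul_inv_norm hu, smul_inv_smul₀ (norm_ne_zero_iff.2 hu) u⟩
  obtain ⟨R, hR⟩ := exists_linearIsometry_single_eq hm i hw
  exact ⟨R, by rw [hR, hwu]⟩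

end LinearIsometry

section MinMetric

variable {d : ℕ} {D : Set (Euc d)} {x v : Euc d}

/-- `f` is a conformal harmonic disk in `D` centred at `x` whose first partial derivative at the
centre is `u`: a competitor in the definition of the minimal metric. -/
structure IsDiskThrough (D : Set (Euc d)) (x u : Euc d) (f : Euc 2 → Euc d) : Prop where
  conformalHarmonic : ConformalHarmonicOnDisk f
  mem : ∀ z ∈ unitDisk, f z ∈ D
  map_zero : f 0 = x
  pd_zero : pd 0 f 0 = u

lemma minMetric_eq_sInf (D : Set (Euc d)) (x v : Euc d) :
    minMetric D x v = sInf {c : ℝ | 0 < c ∧ ∃ f, IsDiskThrough D x (c⁻¹ • v) f} := by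
  rw [minMetric]
  congr 1 with c
  constructor
  · rintro ⟨r, hr, rfl, f, hf, hfD, hf0, hpd⟩
    exact ⟨one_div_pos.2 hr, f, hf, hfD, hf0, by simpa using hpd⟩
  · rintro ⟨hc, f, hf⟩
    exact ⟨c⁻¹, inv_pos.2 hc, by simp, f, hf.conformalHarmonic, hf.mem, hf.map_zero, hf.pd_zero⟩

lemma minMetric_nonneg (D : Set (Euc d)) (x v : Euc d) : 0 ≤ minMetric D x v := by
  rw [minMetric_eq_sInf]
  exact Real.sInf_nonneg fun c hc => hc.1.le

lemma IsDiskThrough.minMetric_le {f : Euc 2 → Euc d} {c : ℝ} (hc : 0 < c)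
    (hf : IsDiskThrough D x (c⁻¹ • v) f) : minMetric D x v ≤ c := by
  rw [minMetric_eq_sInf]
  exact csInf_le ⟨0, fun c hc => hc.1.le⟩ ⟨hc, f, hf⟩

lemma minMetric_of_notMem (hx : x ∉ D) (v : Euc d) : minMetric D x v = 0 := by
  rw [minMetric_eq_sInf, ← Real.sInf_empty]
  congr 1
  refine eq_empty_of_forall_notMem ?_
  rintro c ⟨-, f, hf⟩
  exact hx (hf.map_zero ▸ hf.mem 0 zero_mem_unitDisk)

lemma exists_isDiskThrough_of_ball (hd : 2 ≤ d) {δ : ℝ} (hδ : 0 < δ) (hball : ball x δ ⊆ D)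
    {u : Euc d} (hu : ‖u‖ ≤ δ) : ∃ f, IsDiskThrough D x u f := by
  obtain ⟨R, hR⟩ := exists_norm_smul_linearIsometry_single_eq
    (hd.trans_eq finrank_euclideanSpace_fin.symm) 0 u
  refine ⟨fun z => x + ‖u‖ • R (id z),
    conformalHarmonicOnDisk_id.const_add_smul_linearIsometry x ‖u‖ R, fun z hz => hball ?_,
    by simp, ?_⟩
  · rw [mem_ball, dist_self_add_left, norm_smul, norm_norm, R.norm_map]
    exact (mul_le_mul_of_nonneg_right hu (norm_nonneg _)).trans_lt
      (mul_lt_of_lt_one_right hδ (mem_unitDisk.1 hz))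
  · rw [pd_const_add_smul_linearIsometry differentiableAt_id, pd_id, hR]

lemma exists_isDiskThrough_of_norm_div_lt (hd : 2 ≤ d) {δ : ℝ} (hδ : 0 < δ)
    (hball : ball x δ ⊆ D) {c : ℝ} (hc : ‖v‖ / δ < c) :
    0 < c ∧ ∃ f, IsDiskThrough D x (c⁻¹ • v) f := by
  have hc0 : 0 < c := (div_nonneg (norm_nonneg v) hδ.le).trans_lt hc
  refine ⟨hc0, exists_isDiskThrough_of_ball hd hδ hball ?_⟩
  rw [norm_smul, norm_inv, Real.norm_of_nonneg hc0.le, inv_mul_le_iff₀ hc0]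
  exact ((div_lt_iff₀ hδ).1 hc).le

lemma minMetric_le_of_ball (hd : 2 ≤ d) {δ : ℝ} (hδ : 0 < δ) (hball : ball x δ ⊆ D)
    (v : Euc d) : minMetric D x v ≤ ‖v‖ / δ :=
  le_of_forall_gt_imp_ge_of_dense fun _ hc =>
    let ⟨hc0, _, hf⟩ := exists_isDiskThrough_of_norm_div_lt hd hδ hball hc
    hf.minMetric_le hc0

lemma nonempty_setOf_isDiskThrough (hd : 2 ≤ d) (hD : D ∈ nhds x) (v : Euc d) :
    {c : ℝ | 0 < c ∧ ∃ f, IsDiskThrough D x (c⁻¹ • v) f}.Nonempty :=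
  let ⟨_, hδ, hball⟩ := Metric.mem_nhds_iff.1 hD
  ⟨_, exists_isDiskThrough_of_norm_div_lt hd hδ hball (lt_add_one _)⟩

lemma exists_isDiskThrough_of_minMetric_lt (hd : 2 ≤ d) (hD : D ∈ nhds x) {a : ℝ}
    (ha : minMetric D x v < a) :
    ∃ c f, 0 < c ∧ c < a ∧ IsDiskThrough D x (c⁻¹ • v) f := by
  rw [minMetric_eq_sInf] at ha
  obtain ⟨c, ⟨hc, f, hf⟩, hca⟩ := exists_lt_of_csInf_lt (nonempty_setOf_isDiskThrough hd hD v) ha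
  exact ⟨c, f, hc, hca, hf⟩

lemma abs_apply_le_minMetric (hd : 2 ≤ d) (hD : D ∈ nhds x) (v : Euc d) (l : Euc d →L[ℝ] ℝ)
    {c : ℝ} (hlt : ∀ z ∈ D, l z < c) : |l v| ≤ 2 * minMetric D x v * (c - l x) := by
  have hpos : 0 < 2 * (c - l x) := by linarith [hlt x (mem_of_mem_nhds hD)]
  suffices h : |l v| / (2 * (c - l x)) ≤ minMetric D x v by
    rw [div_le_iff₀ hpos] at h
    linarith
  rw [minMetric_eq_sInf]
  refine le_csInf (nonempty_setOf_isDiskThrough hd hD v) ?_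
  rintro r ⟨hr, f, hf⟩
  have hbound := abs_apply_pd_le_of_harmonicOnNhd
    (conformalHarmonicOnDisk_iff.1 hf.conformalHarmonic).1 l (fun z hz => hlt _ (hf.mem z hz)) 0
  rw [hf.pd_zero, hf.map_zero, map_smul, smul_eq_mul, abs_mul, abs_inv, abs_of_pos hr,
    inv_mul_le_iff₀ hr] at hbound
  rwa [div_le_iff₀ hpos]

end MinMetric

section Rotation

variable {E : Type*} [NormedAddCommGroup E] [InnerProductSpace ℝ E] {v v' : E}

lemma continuousAt_reflection_span_singleton {X : Type*} [TopologicalSpace X] {w y : X → E}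
    {a : X} (hw : ContinuousAt w a) (hwa : w a ≠ 0) (hy : ContinuousAt y a) :
    ContinuousAt (fun q => (ℝ ∙ w q).reflection (y q)) a := by
  simp only [Submodule.reflection_singleton_apply, ← Nat.cast_smul_eq_nsmul ℝ]
  have hcoeff : ContinuousAt (fun q => ⟪w q, y q⟫ / ‖w q‖ ^ 2) a :=
    (hw.inner hy).div (hw.norm.pow 2) (pow_ne_zero 2 (norm_ne_zero_iff.2 hwa))
  exact ((hcoeff.smul hw).const_smul _).sub hy

/-- A rotation taking the direction of `v` to that of `v'`: the product of the reflections in the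
lines spanned by `v` and by the bisector of `v` and `v'`. Unlike an arbitrary such rotation, it
depends continuously on `v'` near `v`. -/
def rot (v v' : E) : E ≃ₗᵢ[ℝ] E :=
  (ℝ ∙ v).reflection.trans (ℝ ∙ (‖v‖⁻¹ • v + ‖v'‖⁻¹ • v')).reflection

lemma norm_div_norm_smul_rot (hv : v ≠ 0) (hv' : v' ≠ 0) : (‖v'‖ / ‖v‖) • rot v v' v = v' := by
  have hself : (ℝ ∙ v).reflection v = v :=
    Submodule.reflection_mem_subspace_eq_self (Submodule.mem_span_singleton_self v)
  have hswap : (ℝ ∙ (‖v‖⁻¹ • v + ‖v'‖⁻¹ • v')).reflection (‖v‖⁻¹ • v) = ‖v'‖⁻¹ • v' := by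
    have h := Submodule.reflection_sub (v := ‖v‖⁻¹ • v) (w := -(‖v'‖⁻¹ • v'))
      (by simpa using (norm_smul_inv_norm (𝕜 := ℝ) hv).trans (norm_smul_inv_norm (𝕜 := ℝ) hv').symm)
    rw [sub_neg_eq_add, Submodule.reflection_orthogonal_apply] at h
    exact neg_injective h
  rw [map_smul] at hswap
  rw [rot, LinearIsometryEquiv.trans_apply, hself, div_eq_mul_inv, mul_smul, hswap,
    smul_inv_smul₀ (norm_ne_zero_iff.2 hv')]

lemma rot_self (hv : v ≠ 0) (z : E) : rot v v z = z := by
  have : ‖v‖ ≠ 0 := norm_ne_zero_iff.2 hv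
  have h : (ℝ ∙ (‖v‖⁻¹ • v + ‖v‖⁻¹ • v)) = (ℝ ∙ v) := by
    rw [← add_smul]
    exact Submodule.span_singleton_smul_eq (IsUnit.mk0 _ (by positivity)) v
  rw [rot, LinearIsometryEquiv.trans_apply]
  simp only [h]
  exact Submodule.reflection_reflection _ z

lemma continuousAt_rot (hv : v ≠ 0) (z : E) :
    ContinuousAt (fun q : E × E => rot v q.1 q.2) (v, z) := by
  have hn : ‖v‖ ≠ 0 := norm_ne_zero_iff.2 hv
  refine continuousAt_reflection_span_singleton (w := fun q : E × E => ‖v‖⁻¹ • v + ‖q.1‖⁻¹ • q.1)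
    (y := fun q => (ℝ ∙ v).reflection q.2) ?_ ?_ ?_
  · exact continuousAt_const.add ((continuousAt_fst.norm.inv₀ hn).smul continuousAt_fst)
  · rw [← add_smul]
    exact smul_ne_zero (by positivity) hv
  · exact (LinearIsometryEquiv.continuous _).continuousAt.comp continuousAt_snd

end Rotation

section UpperSemicontinuity

open Topology

variable {d : ℕ} {D D' : Set (Euc d)} {x x' u v : Euc d} {f : Euc 2 → Euc d}

lemma IsDiskThrough.comp_smul_similarity (hf : IsDiskThrough D x u f) {ρ : ℝ} (hρ : |ρ| ≤ 1)
    (k : ℝ) (R : Euc d →ₗᵢ[ℝ] Euc d)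
    (hmem : ∀ z ∈ unitDisk, x' + k • R (f (ρ • z) - x) ∈ D') :
    IsDiskThrough D' x' ((k * ρ) • R u) fun z => x' + k • R (f (ρ • z) - x) where
  conformalHarmonic := by
    simpa only [map_sub, smul_sub, sub_add_eq_add_sub, add_sub_assoc'] using
      (hf.conformalHarmonic.comp_smul hρ).const_add_smul_linearIsometry (x' - k • R x) k R
  mem := hmem
  map_zero := by simp [hf.map_zero]
  pd_zero := by
    have hdiff := (hf.conformalHarmonic.comp_smul hρ).differentiableAt zero_mem_unitDisk
    have h := pd_const_add_smul_linearIsometry (i := 0) hdiff (x' - k • R x) k R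
    rw [pd_comp_smul, smul_zero, hf.pd_zero, map_smul, smul_smul] at h
    simpa only [map_sub, smul_sub, sub_add_eq_add_sub, add_sub_assoc'] using h

lemma eventually_forall_add_smul_rot_mem {E : Type*} [NormedAddCommGroup E]
    [InnerProductSpace ℝ E] {D C : Set E} (hD : IsOpen D) (hC : IsCompact C) (hCD : C ⊆ D)
    (x : E) {v : E} (hv : v ≠ 0) : ∀ᶠ p : E × E in 𝓝 (x, v),
      ∀ y ∈ C, p.1 + (‖p.2‖ / ‖v‖) • rot v p.2 (y - x) ∈ D := by
  refine hC.eventually_forall_of_forall_eventually fun y hy => ?_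
  have hrot : ContinuousAt (fun q : (E × E) × E => rot v q.1.2 (q.2 - x)) ((x, v), y) :=
    ContinuousAt.comp (f := fun q : (E × E) × E => (q.1.2, q.2 - x)) (x := ((x, v), y))
      (g := fun q : E × E => rot v q.1 q.2) (continuousAt_rot hv (y - x)) (by fun_prop)
  have hcont : ContinuousAt
      (fun q : (E × E) × E => q.1.1 + (‖q.1.2‖ / ‖v‖) • rot v q.1.2 (q.2 - x)) ((x, v), y) := by
    fun_prop
  refine hcont.eventually_mem (hD.mem_nhds ?_)
  simpa [rot_self hv, div_self (norm_ne_zero_iff.2 hv)] using hCD hy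

lemma upperSemicontinuousAt_minMetric_zero (hd : 2 ≤ d) (hD : D ∈ 𝓝 x) :
    UpperSemicontinuousAt (Function.uncurry (minMetric D)) (x, 0) := by
  obtain ⟨δ, hδ, hball⟩ := Metric.mem_nhds_iff.1 hD
  rw [upperSemicontinuousAt_iff]
  intro a ha
  have hlim : Tendsto (fun p : Euc d × Euc d => ‖p.2‖ / (δ / 2)) (𝓝 (x, 0)) (𝓝 0) := by
    have h : Continuous fun p : Euc d × Euc d => ‖p.2‖ / (δ / 2) := by fun_prop
    simpa using h.tendsto (x, 0)
  have hnear : ∀ᶠ p : Euc d × Euc d in 𝓝 (x, 0), p.1 ∈ ball x (δ / 2) :=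
    continuousAt_fst.eventually_mem (ball_mem_nhds x (half_pos hδ))
  filter_upwards [hnear, hlim.eventually_lt_const ((minMetric_nonneg D x 0).trans_lt ha)]
    with p hp hpa
  refine (minMetric_le_of_ball hd (half_pos hδ) ?_ p.2).trans_lt hpa
  exact (ball_subset_ball' (by linarith [mem_ball.1 hp])).trans hball

-- A competing disk, slightly shrunk, has compact closure in `D`, so the similarity carrying
-- `(x, v)` to a nearby `(x', v')` moves it to a disk in `D`.
lemma upperSemicontinuousAt_minMetric_of_ne_zero (hd : 2 ≤ d) (hD : IsOpen D) (hx : x ∈ D)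
    (hv : v ≠ 0) : UpperSemicontinuousAt (Function.uncurry (minMetric D)) (x, v) := by
  rw [upperSemicontinuousAt_iff]
  intro a ha
  obtain ⟨c, f, hc, hca, hf⟩ := exists_isDiskThrough_of_minMetric_lt hd (hD.mem_nhds hx) ha
  obtain ⟨ρ, hρ, hρ1⟩ := exists_between ((div_lt_one (hc.trans hca)).2 hca)
  have hρ0 : 0 < ρ := (div_pos hc (hc.trans hca)).trans hρ
  have hsub : closedBall 0 ρ ⊆ unitDisk := closedBall_subset_ball hρ1
  have hcompact : IsCompact (f '' closedBall 0 ρ) :=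
    (isCompact_closedBall 0 ρ).image_of_continuousOn (hf.conformalHarmonic.1.continuousOn.mono hsub)
  filter_upwards [eventually_forall_add_smul_rot_mem hD hcompact
    (image_subset_iff.2 fun z hz => hf.mem z (hsub hz)) x hv, continuousAt_snd.eventually_ne hv]
    with p hp hp0
  have hdisk := hf.comp_smul_similarity (abs_le.2 ⟨by linarith, hρ1.le⟩) (‖p.2‖ / ‖v‖)
    (rot v p.2).toLinearIsometry fun z hz => hp _ (mem_image_of_mem f (by
      rw [mem_closedBall_zero_iff, norm_smul, Real.norm_of_nonneg hρ0.le]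
      exact mul_le_of_le_one_right hρ0.le (mem_unitDisk.1 hz).le))
  have hvel : (‖p.2‖ / ‖v‖ * ρ) • (rot v p.2).toLinearIsometry (c⁻¹ • v) = (c / ρ)⁻¹ • p.2 := by
    rw [map_smul, smul_smul, mul_assoc, mul_comm, mul_smul, inv_div, ← div_eq_mul_inv]
    exact congrArg _ (norm_div_norm_smul_rot hv hp0)
  rw [hvel] at hdisk
  exact (hdisk.minMetric_le (div_pos hc hρ0)).trans_lt
    ((div_lt_iff₀ hρ0).2 ((div_lt_iff₀' (hc.trans hca)).1 hρ))

lemma upperSemicontinuousAt_minMetric (hd : 2 ≤ d) (hD : IsOpen D) (hx : x ∈ D) (v : Euc d) :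
    UpperSemicontinuousAt (Function.uncurry (minMetric D)) (x, v) := by
  rcases eq_or_ne v 0 with rfl | hv
  · exact upperSemicontinuousAt_minMetric_zero hd (hD.mem_nhds hx)
  · exact upperSemicontinuousAt_minMetric_of_ne_zero hd hD hx hv

lemma measurable_minMetric (hd : 2 ≤ d) (hD : IsOpen D) :
    Measurable (Function.uncurry (minMetric D)) := by
  have husc : UpperSemicontinuousOn (Function.uncurry (minMetric D)) (Prod.fst ⁻¹' D) :=
    fun p hp => (upperSemicontinuousAt_minMetric hd hD hp p.2).upperSemicontinuousWithinAt _
  refine measurable_of_restrict_of_restrict_compl (measurable_fst hD.measurableSet) ?_ ?_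
  · exact (upperSemicontinuousOn_iff_restrict.2 husc).measurable
  · convert measurable_const (a := (0 : ℝ)) using 1
    exact funext fun p => minMetric_of_notMem p.2 _

end UpperSemicontinuity

section Curves

open MeasureTheory Topology

lemma exists_mem_Ioo_castSucc_succ {α : Type*} [LinearOrder α] {n : ℕ} {t : Fin (n + 1) → α}
    {u : α} (hu : u ∈ Icc (t 0) (t (Fin.last n))) (hut : u ∉ range t) :
    ∃ i : Fin n, u ∈ Ioo (t i.castSucc) (t i.succ) := by
  have hne (i : Fin (n + 1)) : t i ≠ u := fun hi => hut ⟨i, hi⟩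
  by_contra! hnone
  have hlt (i : Fin (n + 1)) : t i < u := by
    induction i using Fin.induction with
    | zero => exact hu.1.lt_of_ne (hne 0)
    | succ i ih => exact (not_lt.1 fun hi => hnone i ⟨ih, hi⟩).lt_of_ne (hne _)
  exact (hlt (Fin.last n)).not_ge hu.2

variable {E : Type*} [NormedAddCommGroup E] [NormedSpace ℝ E]

lemma exists_norm_deriv_le_of_contDiffOn_Icc {γ : ℝ → E} {a b : ℝ}
    (hγ : ContDiffOn ℝ 1 γ (Icc a b)) :
    ∃ M, ∀ u ∈ Ioo a b, DifferentiableAt ℝ γ u ∧ ‖deriv γ u‖ ≤ M := by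
  rcases le_or_gt b a with hba | hab
  · simp [Ioo_eq_empty hba.not_gt]
  obtain ⟨M, hM⟩ := isCompact_Icc.exists_bound_of_continuousOn
    (hγ.continuousOn_derivWithin (uniqueDiffOn_Icc hab) le_rfl)
  refine ⟨M, fun u hu => ?_⟩
  have hnhds : Icc a b ∈ 𝓝 u := Icc_mem_nhds hu.1 hu.2
  refine ⟨(hγ.differentiableOn one_ne_zero).differentiableAt hnhds, ?_⟩
  rw [← derivWithin_of_mem_nhds hnhds]
  exact hM u (Ioo_subset_Icc_self hu)

lemma norm_sub_le_integral_of_norm_deriv_le_off_countable [CompleteSpace E] {g : ℝ → E}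
    {B : ℝ → ℝ} {a b : ℝ} {s : Set ℝ} (hab : a ≤ b) (hs : s.Countable)
    (hg : ContinuousOn g (Icc a b)) (hdiff : ∀ t ∈ Ioo a b \ s, DifferentiableAt ℝ g t)
    (hle : ∀ t ∈ Ioo a b \ s, ‖deriv g t‖ ≤ B t) (hB : IntervalIntegrable B volume a b) :
    ‖g b - g a‖ ≤ ∫ t in a..b, B t := by
  have hae : ∀ᵐ t, t ∈ Ioc a b → ‖deriv g t‖ ≤ B t := by
    filter_upwards [hs.ae_notMem volume, (countable_singleton b).ae_notMem volume]
      with t hts htb ht using hle t ⟨⟨ht.1, ht.2.lt_of_ne htb⟩, hts⟩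
  have hint : IntervalIntegrable (deriv g) volume a b := by
    refine hB.mono_fun' (aestronglyMeasurable_deriv g _) ?_
    rwa [EventuallyLE, uIoc_of_le hab, ae_restrict_iff' measurableSet_Ioc]
  rw [← integral_eq_of_hasDerivAt_off_countable_of_le g (deriv g) hab hs hg
    (fun t ht => (hdiff t ht).hasDerivAt) hint]
  exact intervalIntegral.norm_integral_le_of_norm_le hab hae hB

variable {d : ℕ} {D : Set (Euc d)} {γ : ℝ → Euc d} {a b : ℝ}

lemma PiecewiseC1On.le (hγ : PiecewiseC1On γ a b) : a ≤ b := by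
  obtain ⟨-, n, t, hmono, rfl, rfl, -⟩ := hγ
  exact hmono (Fin.zero_le _)

lemma PiecewiseC1On.exists_finite_norm_deriv_le (hγ : PiecewiseC1On γ a b) :
    ∃ (s : Set ℝ) (M : ℝ), s.Finite ∧
      ∀ u ∈ Icc a b \ s, DifferentiableAt ℝ γ u ∧ ‖deriv γ u‖ ≤ M := by
  obtain ⟨-, n, t, -, rfl, rfl, hsmooth⟩ := hγ
  choose M hM using fun i => exists_norm_deriv_le_of_contDiffOn_Icc (hsmooth i)
  obtain ⟨B, hB⟩ := (finite_range M).bddAbove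
  refine ⟨range t, B, finite_range t, fun u ⟨hu, hut⟩ => ?_⟩
  obtain ⟨i, hi⟩ := exists_mem_Ioo_castSucc_succ hu hut
  exact (hM i u hi).imp_right fun h => h.trans (hB (mem_range_self i))

lemma piecewiseC1On_of_contDiff (hγ : ContDiff ℝ 1 γ) (hab : a ≤ b) : PiecewiseC1On γ a b :=
  ⟨hγ.continuous.continuousOn, 0, ![a, b], by simpa [Fin.monotone_iff_le_succ] using hab, rfl, rfl,
    fun _ => hγ.contDiffOn⟩

lemma PiecewiseC1On.intervalIntegrable_minMetric (hγ : PiecewiseC1On γ a b) (hd : 2 ≤ d)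
    (hD : IsOpen D) (hγD : ∀ t ∈ Icc a b, γ t ∈ D) :
    IntervalIntegrable (fun t => minMetric D (γ t) (deriv γ t)) volume a b := by
  obtain ⟨s, M, hs, hM⟩ := hγ.exists_finite_norm_deriv_le
  obtain ⟨δ, hδ, hthick⟩ := (isCompact_Icc.image_of_continuousOn hγ.1).exists_thickening_subset_open
    hD (image_subset_iff.2 hγD)
  rw [intervalIntegrable_iff_integrableOn_Icc_of_le hγ.le]
  refine Integrable.mono' (integrable_const (M / δ)) ?_ ?_
  · exact ((measurable_minMetric hd hD).comp_aemeasurable ((hγ.1.aemeasurable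
      measurableSet_Icc).prodMk (measurable_deriv γ).aemeasurable)).aestronglyMeasurable
  · filter_upwards [ae_restrict_mem measurableSet_Icc,
      ae_restrict_of_ae (hs.countable.ae_notMem volume)] with t ht hts
    have hball : ball (γ t) δ ⊆ D := (ball_subset_thickening (mem_image_of_mem γ ht) δ).trans hthick
    rw [Real.norm_of_nonneg (minMetric_nonneg _ _ _)]
    exact (minMetric_le_of_ball hd hδ hball _).trans
      (div_le_div_of_nonneg_right (hM t ⟨ht, hts⟩).2 hδ.le)

lemma PiecewiseC1On.abs_log_sub_log_le_integral_minMetric (hγ : PiecewiseC1On γ a b) (hd : 2 ≤ d)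
    (hD : IsOpen D) (hγD : ∀ t ∈ Icc a b, γ t ∈ D) (l : Euc d →L[ℝ] ℝ) {c : ℝ}
    (hlt : ∀ z ∈ D, l z < c) :
    |Real.log (c - l (γ b)) - Real.log (c - l (γ a))| ≤
      2 * ∫ t in a..b, minMetric D (γ t) (deriv γ t) := by
  obtain ⟨s, M, hs, hM⟩ := hγ.exists_finite_norm_deriv_le
  have hpos (t : ℝ) (ht : t ∈ Icc a b) : 0 < c - l (γ t) := sub_pos.2 (hlt _ (hγD t ht))
  have hderiv (t : ℝ) (ht : t ∈ Ioo a b \ s) : HasDerivAt (fun t => Real.log (c - l (γ t)))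
      (-l (deriv γ t) / (c - l (γ t))) t :=
    have ht' := Ioo_subset_Icc_self ht.1
    ((l.hasFDerivAt.comp_hasDerivAt t (hM t ⟨ht', ht.2⟩).1.hasDerivAt).const_sub c).log
      (hpos t ht').ne'
  rw [← intervalIntegral.integral_const_mul, ← Real.norm_eq_abs]
  refine norm_sub_le_integral_of_norm_deriv_le_off_countable hγ.le hs.countable
    (g := fun t => Real.log (c - l (γ t))) ?_ (fun t ht => (hderiv t ht).differentiableAt)
    (fun t ht => ?_) ((hγ.intervalIntegrable_minMetric hd hD hγD).const_mul 2)
  · exact (continuousOn_const.sub (l.continuous.comp_continuousOn hγ.1)).log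
      fun t ht => (hpos t ht).ne'
  · have ht' := Ioo_subset_Icc_self ht.1
    rw [(hderiv t ht).deriv, norm_div, norm_neg, Real.norm_of_nonneg (hpos t ht').le,
      div_le_iff₀ (hpos t ht')]
    exact abs_apply_le_minMetric hd (hD.mem_nhds (hγD t ht')) _ l hlt

lemma abs_log_sub_log_le_minDist (hd : 2 ≤ d) (hD : IsOpen D) (hconv : Convex ℝ D) {x y : Euc d}
    (hx : x ∈ D) (hy : y ∈ D) (l : Euc d →L[ℝ] ℝ) {c : ℝ} (hlt : ∀ z ∈ D, l z < c) :
    |Real.log (c - l y) - Real.log (c - l x)| ≤ 2 * minDist D x y := by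
  rw [← div_le_iff₀' two_pos]
  have hseg : ContDiff ℝ 1 fun t : ℝ => x + t • (y - x) := by fun_prop
  refine le_csInf ⟨_, _, piecewiseC1On_of_contDiff hseg zero_le_one,
    fun t ht => hconv.add_smul_sub_mem hx hy ht, by simp, by simp, rfl⟩ ?_
  rintro _ ⟨γ, hγ, hγD, rfl, rfl, rfl⟩
  rw [div_le_iff₀' two_pos]
  exact hγ.abs_log_sub_log_le_integral_minMetric hd hD hγD l hlt

end Curves

section HilbertMetric

variable {d : ℕ} {D : Set (Euc d)} {x y v : Euc d} {M : ℝ}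

lemma chordParam_pos_and_notMem (hD : IsOpen D) (hx : x ∈ D) (hs : chordParam D x v ≠ 0) :
    0 < chordParam D x v ∧ x + chordParam D x v • v ∉ D := by
  set S := {s : ℝ | 0 < s ∧ x + s • v ∉ D} with hS
  have hne : S.Nonempty := by
    by_contra h
    exact hs (by rw [chordParam, ← hS, not_nonempty_iff_eq_empty.1 h, Real.sInf_empty])
  -- Since `x ∈ D`, the condition `0 < s` may be relaxed to the closed condition `0 ≤ s`.
  have hrelax : S = Ici 0 ∩ (fun s : ℝ => x + s • v) ⁻¹' Dᶜ := by
    ext s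
    refine and_congr_left fun h => ⟨le_of_lt, fun h0 => h0.lt_of_ne ?_⟩
    rintro rfl
    exact h (by simpa using hx)
  have hclosed : IsClosed S :=
    hrelax ▸ isClosed_Ici.inter (hD.isClosed_compl.preimage (by fun_prop))
  exact hclosed.csInf_mem hne ⟨0, fun s hs => hs.1.le⟩

lemma exists_support_chord_end (hD : IsOpen D) (hconv : Convex ℝ D) (hx : x ∈ D)
    (hs : chordParam D x v ≠ 0) : ∃ l : Euc d →L[ℝ] ℝ, 0 < l v ∧
      ∀ z ∈ D, l z < l x + chordParam D x v * l v := by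
  obtain ⟨hpos, hmem⟩ := chordParam_pos_and_notMem hD hx hs
  obtain ⟨l, hl⟩ := geometric_hahn_banach_open_point hconv hD hmem
  simp only [map_add, map_smul, smul_eq_mul] at hl
  exact ⟨l, pos_of_mul_pos_right (by linarith [hl x hx]) hpos.le, hl⟩

lemma one_div_chordParam_le_of_forall_halfSpace (hD : IsOpen D) (hconv : Convex ℝ D) (hx : x ∈ D)
    (hM : ∀ (l : Euc d →L[ℝ] ℝ) (c : ℝ), (∀ z ∈ D, l z < c) → |l v| ≤ M * (c - l x)) :
    1 / chordParam D x v ≤ M := by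
  rcases eq_or_ne (chordParam D x v) 0 with hs | hs
  · simpa [hs] using hM 0 1 (by simp)
  · obtain ⟨l, hlv, hl⟩ := exists_support_chord_end hD hconv hx hs
    have h := hM l _ hl
    rw [abs_of_pos hlv, add_sub_cancel_left, ← mul_assoc] at h
    rw [div_le_iff₀ (chordParam_pos_and_notMem hD hx hs).1]
    exact le_of_mul_le_mul_right (by rwa [one_mul]) hlv

lemma hilbertFinsler_le_of_forall_halfSpace (hD : IsOpen D) (hconv : Convex ℝ D) (hx : x ∈ D)
    (hM : ∀ (l : Euc d →L[ℝ] ℝ) (c : ℝ), (∀ z ∈ D, l z < c) → |l v| ≤ M * (c - l x)) :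
    hilbertFinsler D x v ≤ M := by
  have hfwd := one_div_chordParam_le_of_forall_halfSpace hD hconv hx hM
  have hbwd := one_div_chordParam_le_of_forall_halfSpace (v := -v) hD hconv hx
    (by simpa only [map_neg, abs_neg] using hM)
  rw [hilbertFinsler]
  linarith

lemma one_lt_chordParam_sub (hD : IsOpen D) (hconv : Convex ℝ D) (hx : x ∈ D) (hy : y ∈ D)
    (hs : chordParam D x (y - x) ≠ 0) : 1 < chordParam D x (y - x) := by
  obtain ⟨hpos, hmem⟩ := chordParam_pos_and_notMem hD hx hs
  by_contra! hle
  exact hmem (hconv.add_smul_sub_mem hx hy ⟨hpos.le, hle⟩)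

lemma log_chordParam_div_le_of_forall_halfSpace (hD : IsOpen D) (hconv : Convex ℝ D)
    (hx : x ∈ D) (hy : y ∈ D) (hs : chordParam D x (y - x) ≠ 0)
    (hM : ∀ (l : Euc d →L[ℝ] ℝ) (c : ℝ), (∀ z ∈ D, l z < c) →
      |Real.log (c - l y) - Real.log (c - l x)| ≤ M) :
    Real.log (chordParam D x (y - x) / (chordParam D x (y - x) - 1)) ≤ M := by
  have hs1 := one_lt_chordParam_sub hD hconv hx hy hs
  obtain ⟨l, hlv, hl⟩ := exists_support_chord_end hD hconv hx hs
  set s := chordParam D x (y - x)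
  have : 0 < s - 1 := sub_pos.2 hs1
  have hdist : l x + s * l (y - x) - l y = (s - 1) * l (y - x) := by rw [map_sub]; ring
  have h := (abs_sub_comm _ _).trans_le (hM l _ hl)
  rw [hdist, add_sub_cancel_left, ← Real.log_div (by positivity) (by positivity),
    mul_div_mul_right _ _ hlv.ne'] at h
  exact (le_abs_self _).trans h

lemma log_one_add_chordParam_div_le_of_forall_halfSpace (hD : IsOpen D) (hconv : Convex ℝ D)
    (hx : x ∈ D) (hs : chordParam D x (x - y) ≠ 0)
    (hM : ∀ (l : Euc d →L[ℝ] ℝ) (c : ℝ), (∀ z ∈ D, l z < c) →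
      |Real.log (c - l y) - Real.log (c - l x)| ≤ M) :
    Real.log ((1 + chordParam D x (x - y)) / chordParam D x (x - y)) ≤ M := by
  obtain ⟨hpos, -⟩ := chordParam_pos_and_notMem hD hx hs
  obtain ⟨l, hlv, hl⟩ := exists_support_chord_end hD hconv hx hs
  set s := chordParam D x (x - y)
  have hdist : l x + s * l (x - y) - l y = (1 + s) * l (x - y) := by rw [map_sub]; ring
  have h := hM l _ hl
  rw [hdist, add_sub_cancel_left, ← Real.log_div (by positivity) (by positivity),
    mul_div_mul_right _ _ hlv.ne'] at h
  exact (le_abs_self _).trans h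

-- The two factors of the cross-ratio are the ratios of the distances of `x` and `y` to the
-- hyperplanes supporting `D` at the two ends of the chord.
lemma hilbertDist_le_of_forall_halfSpace (hD : IsOpen D) (hconv : Convex ℝ D) (hx : x ∈ D)
    (hy : y ∈ D) (hM : ∀ (l : Euc d →L[ℝ] ℝ) (c : ℝ), (∀ z ∈ D, l z < c) →
      |Real.log (c - l y) - Real.log (c - l x)| ≤ M) :
    hilbertDist D x y ≤ M := by
  have hM0 : 0 ≤ M := by simpa using hM 0 1 (by simp)
  have hite (p : Prop) [Decidable p] (r : ℝ) (hr : ¬p → 0 < r ∧ Real.log r ≤ M) :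
      0 < (if p then 1 else r) ∧ Real.log (if p then 1 else r) ≤ M := by
    split_ifs with h
    exacts [⟨one_pos, by simpa using hM0⟩, hr h]
  obtain ⟨hfwd, hlog_fwd⟩ := hite (chordParam D x (y - x) = 0) _ fun hs =>
    have hs1 := one_lt_chordParam_sub hD hconv hx hy hs
    ⟨div_pos (one_pos.trans hs1) (sub_pos.2 hs1),
      log_chordParam_div_le_of_forall_halfSpace hD hconv hx hy hs hM⟩
  obtain ⟨hbwd, hlog_bwd⟩ := hite (chordParam D x (x - y) = 0) _ fun hs =>
    have hpos := (chordParam_pos_and_notMem hD hx hs).1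
    ⟨div_pos (add_pos one_pos hpos) hpos,
      log_one_add_chordParam_div_le_of_forall_halfSpace hD hconv hx hs hM⟩
  rw [hilbertDist]
  rcases eq_or_ne x y with hxy | hxy
  · rwa [if_pos hxy]
  · rw [if_neg hxy, Real.log_mul hfwd.ne' hbwd.ne']
    linarith

end HilbertMetric

theorem hilbert_le_two_mul_minimal_general (d : ℕ) (hd : 2 ≤ d) (D : Set (Euc d))
    (hOpen : IsOpen D) (hConv : Convex ℝ D) :
    (∀ x ∈ D, ∀ v : Euc d, hilbertFinsler D x v ≤ 2 * minMetric D x v) ∧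
    (∀ x ∈ D, ∀ y ∈ D, hilbertDist D x y ≤ 2 * minDist D x y) :=
  ⟨fun _ hx v => hilbertFinsler_le_of_forall_halfSpace hOpen hConv hx fun l _ hlt =>
    abs_apply_le_minMetric hd (hOpen.mem_nhds hx) v l hlt,
  fun _ hx _ hy => hilbertDist_le_of_forall_halfSpace hOpen hConv hx hy fun l _ hlt =>
    abs_log_sub_log_le_minDist hd hOpen hConv hx hy l hlt⟩

/-- In any convex domain `D ⊆ ℝ^d` (`d ≥ 3`) the Hilbert metric is
dominated by twice the minimal metric, both infinitesimally and at the distance level. -/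
theorem hilbert_le_two_mul_minimal
    (d : ℕ) (hd : 3 ≤ d) (D : Set (Euc d))
    (hOpen : IsOpen D) (hConn : IsConnected D) (hConv : Convex ℝ D) :
    (∀ x ∈ D, ∀ v : Euc d, hilbertFinsler D x v ≤ 2 * minMetric D x v) ∧
    (∀ x ∈ D, ∀ y ∈ D, hilbertDist D x y ≤ 2 * minDist D x y) :=
  hilbert_le_two_mul_minimal_general d (by omega) D hOpen hConv
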